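/- arXiv:2009.07319 — 4 statements merged into one kernel-verified Lean document; each statement's English description precedes it below -/
import Mathlib

section
/- The linear span of the family of Hermite functions \(x \mapsto H_n(x)\, e^{-x^2/4}\), for n ranging over the natural numbers, is dense in \(L^2(\mathbb{R})\). -/
/-!
By Hilbert space duality it suffices that every `g ∈ L²(ℝ)` orthogonal to all Hermite functions
vanishes. Put `h x = e^{-x²/4} g x`. Since `Hₙ` is monic of degree `n`, the Hermite polynomials
span `ℤ[X]`, so all moments `∫ xⁿ h x` are zero (`integral_pow_mul_eq_zero`).

The Gaussian factor makes `e^{c|x|} h x` integrable for every `c`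
(`integrable_exp_mul_abs_mul_gaussian_mul`), hence `∫ e^{itx} h x` may be expanded in a power
series in `t`, with the moments of `h` as coefficients, and it vanishes identically
(`integral_cexp_mul_eq_zero`). So the finite measures with densities `h⁺` and `h⁻` have the same
characteristic function; they coincide, and `h = 0` almost everywhere
(`ae_eq_zero_of_integral_cexp_mul_eq_zero`).
-/

open Polynomial Real MeasureTheory

/-- Uniqueness of the Fourier transform of an integrable real function, by comparing the finite
measures whose densities are its positive and negative parts. -/
lemma ae_eq_zero_of_integral_cexp_mul_eq_zero {h : ℝ → ℝ} (hm : Measurable h)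
    (hi : Integrable h)
    (h0 : ∀ t : ℝ, ∫ x : ℝ, Complex.exp (t * x * Complex.I) * (h x : ℂ) = 0) :
    h =ᵐ[volume] 0 := by
  have fin1 : IsFiniteMeasure (volume.withDensity fun x => ENNReal.ofReal (h x)) :=
    isFiniteMeasure_withDensity_ofReal hi.2
  have fin2 : IsFiniteMeasure (volume.withDensity fun x => ENNReal.ofReal (-h x)) :=
    isFiniteMeasure_withDensity_ofReal hi.neg.2
  have key : (volume.withDensity fun x => ENNReal.ofReal (h x)) =
      volume.withDensity fun x => ENNReal.ofReal (-h x) := by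
    apply Measure.ext_of_charFun
    funext t
    rw [charFun_apply_real, charFun_apply_real,
      integral_withDensity_eq_integral_toReal_smul (by fun_prop) (by simp),
      integral_withDensity_eq_integral_toReal_smul (by fun_prop) (by simp), ← sub_eq_zero]
    have hint : ∀ k : ℝ → ℝ, Integrable k →
        Integrable (fun x : ℝ => (ENNReal.ofReal (k x)).toReal •
          Complex.exp (t * x * Complex.I)) := by
      intro k hk
      have h1 : Integrable (fun x : ℝ => (ENNReal.ofReal (k x)).toReal) := by
        simpa only [ENNReal.toReal_ofReal'] using hk.pos_part
      refine h1.smul_bdd 1 (by fun_prop) (ae_of_all _ fun x => ?_)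
      rw [← Complex.ofReal_mul, Complex.norm_exp_ofReal_mul_I]
    rw [← integral_sub (hint h hi) (hint (fun x => -h x) hi.neg), ← h0 t]
    congr 1
    funext x
    rw [← sub_smul, ENNReal.toReal_ofReal', ENNReal.toReal_ofReal', Complex.real_smul, mul_comm]
    congr 2
    rcases le_total 0 (h x) with hx | hx
    · rw [max_eq_left hx, max_eq_right (by linarith), sub_zero]
    · rw [max_eq_right hx, max_eq_left (by linarith)]; ring
  rw [withDensity_eq_iff (by fun_prop) (by fun_prop) hi.lintegral_lt_top.ne] at key
  filter_upwards [key] with x hx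
  have := congrArg ENNReal.toReal hx
  rw [ENNReal.toReal_ofReal', ENNReal.toReal_ofReal'] at this
  rcases le_total 0 (h x) with hx | hx
  · rw [max_eq_left hx, max_eq_right (by linarith)] at this
    exact this
  · rw [max_eq_right hx, max_eq_left (by linarith)] at this
    simp only [Pi.zero_apply]; linarith

/-- If `h` has exponential moments of every order, its Fourier transform is the sum of the power
series whose coefficients are the moments of `h`, so it vanishes when these do. -/
lemma integral_cexp_mul_eq_zero {h : ℝ → ℝ} (hm : Measurable h)
    (hi : ∀ c : ℝ, Integrable (fun x => Real.exp (c * |x|) * h x))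
    (h0 : ∀ n : ℕ, ∫ x : ℝ, x ^ n * h x = 0) (t : ℝ) :
    ∫ x : ℝ, Complex.exp (t * x * Complex.I) * (h x : ℂ) = 0 := by
  have hexp : ∀ x : ℝ, HasSum (fun n : ℕ => (|t| * |x|) ^ n / (n.factorial : ℝ) * |h x|)
      (Real.exp (|t| * |x|) * |h x|) := fun x => by
    rw [Real.exp_eq_exp_ℝ]
    exact (NormedSpace.expSeries_div_hasSum_exp (|t| * |x|)).mul_right _
  have hs := hasSum_integral_of_dominated_convergence (μ := (volume : Measure ℝ))
    (F := fun (n : ℕ) (x : ℝ) => ((t * x * Complex.I) ^ n / (n.factorial : ℂ)) * (h x : ℂ))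
    (f := fun x : ℝ => Complex.exp (t * x * Complex.I) * (h x : ℂ))
    (fun (n : ℕ) (x : ℝ) => (|t| * |x|) ^ n / (n.factorial : ℝ) * |h x|)
    (fun n => by fun_prop)
    (fun n => ae_of_all _ fun x => by simp)
    (ae_of_all _ fun x => (hexp x).summable)
    (by
      simp_rw [fun x => (hexp x).tsum_eq]
      simpa [abs_mul] using (hi |t|).abs)
    (ae_of_all _ fun x => by
      have := (NormedSpace.expSeries_div_hasSum_exp (t * x * Complex.I : ℂ)).mul_right (h x : ℂ)
      rwa [← Complex.exp_eq_exp_ℂ] at this)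
  have hz : ∀ n : ℕ, ∫ x : ℝ, ((t * x * Complex.I) ^ n / (n.factorial : ℂ)) * (h x : ℂ) = 0 := by
    intro n
    have : ∀ x : ℝ, ((t * x * Complex.I) ^ n / (n.factorial : ℂ)) * (h x : ℂ) =
        ((t * Complex.I) ^ n / (n.factorial : ℂ)) * ((x ^ n * h x : ℝ) : ℂ) := fun x => by
      push_cast; ring
    simp_rw [this]
    rw [integral_const_mul, integral_complex_ofReal, h0]
    simp
  simp only [hz] at hs
  exact hs.unique hasSum_zero

lemma integrable_exp_mul_abs_mul_gaussian_mul {g : ℝ → ℝ} (hg : MemLp g 2) (c : ℝ) :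
    Integrable (fun x : ℝ => Real.exp (c * |x|) * (Real.exp (-x ^ 2 / 4) * g x)) := by
  have h1 : MemLp (fun x : ℝ => Real.exp (c * |x| + -x ^ 2 / 4)) 2 := by
    rw [memLp_two_iff_integrable_sq (by fun_prop)]
    -- Completing the square: `2c|x| ≤ 4c² + x²/4`.
    refine ((integrable_exp_neg_mul_sq (b := 1 / 4) (by norm_num)).const_mul
      (Real.exp (4 * c ^ 2))).mono' (by fun_prop) (ae_of_all _ fun x => ?_)
    rw [Real.norm_of_nonneg (by positivity), ← Real.exp_add, ← Real.exp_nat_mul]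
    apply Real.exp_le_exp.mpr
    push_cast
    nlinarith [sq_nonneg (2 * c - |x| / 2), sq_abs x]
  refine (h1.integrable_mul hg).congr (ae_of_all _ fun x => ?_)
  simp only [Pi.mul_apply, Real.exp_add, mul_assoc]

/-- The Hermite polynomials span `ℤ[X]`, being monic with one in each degree; hence a linear
condition on polynomials which holds for them holds for the monomials. -/
lemma integral_pow_mul_eq_zero {h : ℝ → ℝ}
    (hi : ∀ n : ℕ, Integrable (fun x : ℝ => aeval x (hermite n) * h x))
    (h0 : ∀ n : ℕ, ∫ x : ℝ, aeval x (hermite n) * h x = 0) (n : ℕ) :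
    ∫ x : ℝ, x ^ n * h x = 0 := by
  have htop := Polynomial.Sequence.span ⟨hermite, degree_hermite⟩
    (fun i => by
      change IsUnit (hermite i).leadingCoeff
      rw [leadingCoeff_hermite]; exact isUnit_one)
  have hall : ∀ p : ℤ[X], Integrable (fun x : ℝ => aeval x p * h x) ∧
      ∫ x : ℝ, aeval x p * h x = 0 := by
    intro p
    have hp : p ∈ Submodule.span ℤ (Set.range hermite) := by
      exact htop ▸ Submodule.mem_top
    induction hp using Submodule.span_induction with
    | mem p hp =>
      obtain ⟨m, rfl⟩ := hp
      exact ⟨hi m, h0 m⟩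
    | zero => simp
    | add p q _ _ hp hq =>
      simp only [map_add, add_mul]
      exact ⟨hp.1.add hq.1, by rw [integral_add hp.1 hq.1, hp.2, hq.2, add_zero]⟩
    | smul a p _ hp =>
      simp only [map_smul]
      simp only [zsmul_eq_mul, mul_assoc]
      exact ⟨hp.1.const_mul _, by rw [integral_const_mul, hp.2, mul_zero]⟩
  simpa using (hall (X ^ n)).2

/-- The linear span of the Hermite functions `x ↦ Hₙ(x) e^{-x²/4}` is dense in `L²(ℝ)`. -/
theorem hermite_functions_span_dense
    (F : ℕ → Lp ℝ 2 (volume : Measure ℝ))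
    (hF : ∀ n : ℕ, (F n : ℝ → ℝ) =ᵐ[volume]
      fun x : ℝ => (aeval x (hermite n)) * Real.exp (-x ^ 2 / 4)) :
    Dense ((Submodule.span ℝ (Set.range F) : Submodule ℝ (Lp ℝ 2 (volume : Measure ℝ))) :
      Set (Lp ℝ 2 (volume : Measure ℝ))) := by
  rw [Submodule.dense_iff_topologicalClosure_eq_top, Submodule.topologicalClosure_eq_top_iff,
    Submodule.eq_bot_iff]
  intro g hg
  have hgm : Measurable (g : ℝ → ℝ) := (Lp.stronglyMeasurable g).measurable
  have hinner : ∀ n : ℕ, (fun x : ℝ => inner ℝ (F n x) (g x)) =ᵐ[volume]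
      fun x : ℝ => aeval x (hermite n) * (Real.exp (-x ^ 2 / 4) * g x) := fun n => by
    filter_upwards [hF n] with x hx
    rw [hx, ← mul_assoc]
    exact mul_comm _ _
  have horth : ∀ n : ℕ,
      ∫ x : ℝ, aeval x (hermite n) * (Real.exp (-x ^ 2 / 4) * g x) = 0 := fun n => by
    rw [← integral_congr_ae (hinner n), ← L2.inner_def]
    exact (Submodule.mem_orthogonal _ _).mp hg _ (Submodule.subset_span ⟨n, rfl⟩)
  have hmom := integral_pow_mul_eq_zero
    (fun n => (L2.integrable_inner (𝕜 := ℝ) (F n) g).congr (hinner n)) horth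
  have hexp := integrable_exp_mul_abs_mul_gaussian_mul (Lp.memLp g)
  have hmeas : Measurable (fun x : ℝ => Real.exp (-x ^ 2 / 4) * g x) := by fun_prop
  have hzero := ae_eq_zero_of_integral_cexp_mul_eq_zero hmeas (by simpa using hexp 0)
    (integral_cexp_mul_eq_zero hmeas hexp hmom)
  rw [Lp.eq_zero_iff_ae_eq_zero]
  filter_upwards [hzero] with x hx
  exact (mul_eq_zero.mp hx).resolve_left (Real.exp_pos _).ne'
end

section
/- For every Schwartz function \(\psi : \mathbb{R} \to \mathbb{R}\), the series \(\frac{1}{\sqrt{2\pi}} \sum_{n=0}^{\infty} \frac{H_n(0)}{n!} \int_{-\infty}^{\infty} \psi(x)\, H_n(x)\, e^{-x^2/4}\, dx\) converges and its sum equals \(\psi(0)\). (This is the Hermite-expansion representation of the Dirac delta function at 0, tested against \(\psi\).) -/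
/-!
Write `w = exp (-x² / 4)` and `aₙ(f) = ∫ f Hₙ w`. Only even indices contribute, with
`cₖ = H₂ₖ(0) / (2k)!` satisfying `(2k + 2) cₖ₊₁ = -cₖ`.

*Value of the sum.* Write `ψ = ψ(0) w + x φ`. Orthogonality handles the Gaussian part: it
contributes `√(2π) ψ(0)` through `a₀` and nothing else. For the second part the three-term
recurrence `x Hₙ₊₁ = Hₙ₊₂ + (n + 1) Hₙ` makes the series telescope
(`sum_zcoef_mul_hcoef`, a Christoffel–Darboux identity), leaving the remainder `c_N a_{2N+1}(φ)`.
One integration by parts (`hcoef_succ`) turns this into `c_N a_{2N}(x/2 φ + φ')`. By Cauchy–Schwarz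
and `‖Hₙ w‖² = √(2π) n!` its square is at most a constant times
`c_N² (2N)! = (2N choose N) / 4 ^ N`, which tends to zero.

*Unconditional convergence.* `HasSum` requires absolute convergence, which the telescoping does not
give. Integrating by parts four times on `ψ` itself bounds the terms by a multiple of `(k + 1)⁻²`
(`summable_zcoef_mul_hcoef`).
-/

open Polynomial Real MeasureTheory

/-! ### Hermite polynomials against the Gaussian -/

/-- The Hermite polynomials form an Appell sequence. -/
lemma derivative_hermite_succ (n : ℕ) :
    derivative (hermite (n + 1)) = (n + 1 : ℤ[X]) * hermite n := by
  induction n with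
  | zero => simp
  | succ n ih =>
    have h := congrArg derivative ih
    rw [hermite_succ (n + 1), derivative_sub, derivative_mul, ih]
    simp only [derivative_mul, derivative_X, derivative_add, derivative_natCast, derivative_one]
    have h2 := hermite_succ n
    push_cast
    rw [h2]
    rw [h2] at ih
    ring

lemma aeval_hermite_succ (n : ℕ) (x : ℝ) :
    aeval x (hermite (n + 1)) = x * aeval x (hermite n) - aeval x (derivative (hermite n)) := by
  simp [hermite_succ]

lemma aeval_derivative_hermite_succ (n : ℕ) (x : ℝ) :
    aeval x (derivative (hermite (n + 1))) = ((n : ℝ) + 1) * aeval x (hermite n) := by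
  rw [derivative_hermite_succ]; simp

lemma aeval_hermite_add_two (n : ℕ) (x : ℝ) :
    aeval x (hermite (n + 2)) =
      x * aeval x (hermite (n + 1)) - ((n : ℝ) + 1) * aeval x (hermite n) := by
  rw [aeval_hermite_succ, aeval_derivative_hermite_succ]

lemma integrable_pow_mul_gauss {b : ℝ} (hb : 0 < b) (n : ℕ) :
    Integrable (fun x : ℝ => x ^ n * exp (-b * x ^ 2)) := by
  have := integrable_rpow_mul_exp_neg_mul_sq hb (s := n)
    (lt_of_lt_of_le (by norm_num) (Nat.cast_nonneg n))
  simpa using this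

lemma integrable_poly_mul_gauss {b : ℝ} (hb : 0 < b) (p : ℤ[X]) :
    Integrable (fun x : ℝ => aeval x p * exp (-b * x ^ 2)) := by
  induction p using Polynomial.induction_on' with
  | add p q hp hq =>
    refine (hp.add hq).congr (ae_of_all _ fun x => ?_)
    simp [add_mul]
  | monomial n a =>
    refine ((integrable_pow_mul_gauss hb n).const_mul (a : ℝ)).congr (ae_of_all _ fun x => ?_)
    simp [aeval_monomial, mul_assoc]

/-- The functions that are integrable against every polynomial times `exp (-x² / 4)`; for these
all Hermite coefficients are honest integrals. -/
def GaussInt (f : ℝ → ℝ) : Prop :=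
  ∀ p : ℤ[X], Integrable (fun x : ℝ => f x * aeval x p * exp (-x ^ 2 / 4))

/-- The unnormalised `n`-th Hermite coefficient `∫ f Hₙ exp (-x² / 4)`. -/
noncomputable def hcoef (f : ℝ → ℝ) (n : ℕ) : ℝ :=
  ∫ x : ℝ, f x * aeval x (hermite n) * exp (-x ^ 2 / 4)

lemma GaussInt.of_bounded {f : ℝ → ℝ} (hf : Continuous f) {C : ℝ} (hC : ∀ x, |f x| ≤ C) :
    GaussInt f := by
  intro p
  have h := (integrable_poly_mul_gauss (b := 1 / 4) (by norm_num) p).bdd_mul (f := f) (c := C)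
    hf.aestronglyMeasurable (ae_of_all _ hC)
  refine h.congr (ae_of_all _ fun x => ?_)
  simp only [mul_assoc]
  ring_nf

lemma exp_quarter_mul_self (x : ℝ) :
    exp (-x ^ 2 / 4) * exp (-x ^ 2 / 4) = exp (-(1 / 2) * x ^ 2) := by
  rw [← exp_add]; ring_nf

lemma GaussInt.poly (q : ℤ[X]) :
    GaussInt (fun x => aeval x q * exp (-x ^ 2 / 4)) := by
  intro p
  refine (integrable_poly_mul_gauss (b := 1 / 2) (by norm_num) (q * p)).congr
    (ae_of_all _ fun x => ?_)
  simp only [map_mul, ← exp_quarter_mul_self]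
  ring

lemma hasDerivAt_gauss (x : ℝ) :
    HasDerivAt (fun x : ℝ => exp (-x ^ 2 / 4)) (-(x / 2) * exp (-x ^ 2 / 4)) x := by
  have h : HasDerivAt (fun x : ℝ => -x ^ 2 / 4) (-(2 * x) / 4) x := by
    simpa using ((hasDerivAt_pow 2 x).neg.div_const 4)
  exact h.exp.congr_deriv (by ring)

/-- Integration by parts: `x/2 - d/dx` is the creation operator for the Hermite functions and
`x/2 + d/dx` is its adjoint. -/
lemma hcoef_succ {f f' : ℝ → ℝ} (hd : ∀ x, HasDerivAt f (f' x) x) (hf : GaussInt f)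
    (hf' : GaussInt f') (n : ℕ) :
    hcoef f (n + 1) = hcoef (fun x => x / 2 * f x + f' x) n := by
  have hv : ∀ x : ℝ, HasDerivAt (fun x : ℝ => aeval x (hermite n) * exp (-x ^ 2 / 4))
      (x / 2 * aeval x (hermite n) * exp (-x ^ 2 / 4)
        - aeval x (hermite (n + 1)) * exp (-x ^ 2 / 4)) x := fun x => by
    refine (((hermite n).hasDerivAt_aeval x).mul (hasDerivAt_gauss x)).congr_deriv ?_
    rw [aeval_hermite_succ]; ring
  have hX : Integrable (fun x : ℝ => f x * (x / 2) * aeval x (hermite n) * exp (-x ^ 2 / 4)) := by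
    refine ((hf (X * hermite n)).const_mul (1 / 2)).congr (ae_of_all _ fun x => ?_)
    simp only [map_mul, aeval_X]; ring
  have key := integral_mul_deriv_eq_deriv_mul_of_integrable (u := f) (u' := f')
    (fun x _ => hd x) (fun x _ => hv x)
    ((hX.sub (hf (hermite (n + 1)))).congr (ae_of_all _ fun x => by simp; ring))
    ((hf' (hermite n)).congr (ae_of_all _ fun x => by simp; ring))
    ((hf (hermite n)).congr (ae_of_all _ fun x => by simp; ring))
  have e1 : ∫ x : ℝ, f x * (x / 2 * aeval x (hermite n) * exp (-x ^ 2 / 4)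
        - aeval x (hermite (n + 1)) * exp (-x ^ 2 / 4)) =
      (∫ x : ℝ, f x * (x / 2) * aeval x (hermite n) * exp (-x ^ 2 / 4)) - hcoef f (n + 1) := by
    rw [hcoef, ← integral_sub hX (hf (hermite (n + 1)))]
    congr 1; ext x; ring
  have e2 : ∫ x : ℝ, f' x * (aeval x (hermite n) * exp (-x ^ 2 / 4)) = hcoef f' n := by
    rw [hcoef]; congr 1; ext x; ring
  have e3 : hcoef (fun x => x / 2 * f x + f' x) n =
      (∫ x : ℝ, f x * (x / 2) * aeval x (hermite n) * exp (-x ^ 2 / 4)) + hcoef f' n := by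
    rw [hcoef, hcoef, ← integral_add hX (hf' (hermite n))]
    congr 1; ext x; ring
  rw [e1, e2] at key
  rw [e3]; linarith

/-- Every polynomial times the Gaussian is lowered by `x/2 + d/dx` to its derivative times the
Gaussian. -/
lemma hcoef_poly_succ (q : ℤ[X]) (n : ℕ) :
    hcoef (fun x => aeval x q * exp (-x ^ 2 / 4)) (n + 1) =
      hcoef (fun x => aeval x (derivative q) * exp (-x ^ 2 / 4)) n := by
  have hd : ∀ x : ℝ, HasDerivAt (fun x : ℝ => aeval x q * exp (-x ^ 2 / 4))
      (aeval x (derivative q) * exp (-x ^ 2 / 4)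
        - x / 2 * (aeval x q * exp (-x ^ 2 / 4))) x := fun x => by
    refine ((q.hasDerivAt_aeval x).mul (hasDerivAt_gauss x)).congr_deriv ?_
    ring
  rw [hcoef_succ hd (GaussInt.poly q)]
  · congr 1; ext x; ring
  · intro p
    refine ((GaussInt.poly (derivative q) p).sub
      ((GaussInt.poly (X * q) p).const_mul (1 / 2))).congr (ae_of_all _ fun x => ?_)
    simp only [Pi.sub_apply, map_mul, aeval_X]; ring

lemma hcoef_gauss_zero : hcoef (fun x => exp (-x ^ 2 / 4)) 0 = √(2 * π) := by
  have h := integral_gaussian (1 / 2)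
  simp only [hcoef, hermite_zero, map_one, mul_one, exp_quarter_mul_self]
  rw [h]; congr 1; ring

lemma hcoef_gauss_succ (n : ℕ) : hcoef (fun x => exp (-x ^ 2 / 4)) (n + 1) = 0 := by
  have h := hcoef_poly_succ 1 n
  simpa [hcoef] using h

lemma hcoef_hermite_self (n : ℕ) :
    hcoef (fun x => aeval x (hermite n) * exp (-x ^ 2 / 4)) n = √(2 * π) * n.factorial := by
  induction n with
  | zero => simpa using hcoef_gauss_zero
  | succ n ih =>
    rw [hcoef_poly_succ]
    simp only [aeval_derivative_hermite_succ, mul_assoc]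
    have : hcoef (fun x => ((n : ℝ) + 1) * (aeval x (hermite n) * exp (-x ^ 2 / 4))) n =
        ((n : ℝ) + 1) * hcoef (fun x => aeval x (hermite n) * exp (-x ^ 2 / 4)) n := by
      rw [hcoef, hcoef, ← integral_const_mul]
      congr 1; ext x; ring
    rw [this, ih, Nat.factorial_succ]; push_cast; ring

/-- Cauchy–Schwarz against the Hermite functions. -/
lemma hcoef_sq_le {f : ℝ → ℝ} (hf : GaussInt f) (hf2 : Integrable (fun x => f x ^ 2)) (n : ℕ) :
    hcoef f n ^ 2 ≤ (∫ x, f x ^ 2) * (√(2 * π) * n.factorial) := by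
  set B : ℝ := √(2 * π) * n.factorial with hB
  have hBpos : 0 < B := by positivity
  set I := hcoef f n with hI
  have i2 := hf (hermite n)
  have i3 := GaussInt.poly (hermite n) (hermite n)
  have h0 : 0 ≤ ∫ x : ℝ, (f x - I / B * (aeval x (hermite n) * exp (-x ^ 2 / 4))) ^ 2 :=
    integral_nonneg fun x => sq_nonneg _
  have h1 (c : ℝ) : ∫ x : ℝ, (f x - c * (aeval x (hermite n) * exp (-x ^ 2 / 4))) ^ 2 =
      (∫ x, f x ^ 2) - 2 * c * I + c ^ 2 * B := by
    have hBi := hcoef_hermite_self n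
    rw [← hB] at hBi
    rw [hI, ← hBi]
    simp only [hcoef]
    rw [← integral_const_mul, ← integral_const_mul, ← integral_sub hf2 (i2.const_mul _),
      ← integral_add (by exact hf2.sub (i2.const_mul _)) (by exact i3.const_mul _)]
    congr 1; ext x; ring
  rw [h1] at h0
  have h2 : (∫ x, f x ^ 2) - 2 * (I / B) * I + (I / B) ^ 2 * B = (∫ x, f x ^ 2) - I ^ 2 / B := by
    field_simp; ring
  rw [h2] at h0
  exact (div_le_iff₀ hBpos).1 (by linarith)

/-! ### The values `Hₙ(0)` -/

/-- The coefficient `H₂ₖ(0) / (2k)!`; its value is `(-1)ᵏ / (2ᵏ k!)`. -/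
noncomputable def zcoef (k : ℕ) : ℝ := aeval (0 : ℝ) (hermite (2 * k)) / ((2 * k).factorial : ℝ)

lemma aeval_zero_hermite_odd (k : ℕ) : aeval (0 : ℝ) (hermite (2 * k + 1)) = 0 := by
  induction k with
  | zero => simp
  | succ k ih =>
    rw [show 2 * (k + 1) + 1 = (2 * k + 1) + 2 by ring, aeval_hermite_add_two, ih]; simp

lemma zcoef_zero : zcoef 0 = 1 := by simp [zcoef]

lemma zcoef_succ_mul (k : ℕ) : zcoef (k + 1) * (2 * k + 2) = -zcoef k := by
  have h : aeval (0 : ℝ) (hermite (2 * (k + 1))) =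
      -((2 * k : ℝ) + 1) * aeval (0 : ℝ) (hermite (2 * k)) := by
    rw [show 2 * (k + 1) = 2 * k + 2 by ring, aeval_hermite_add_two]; push_cast; ring
  rw [zcoef, zcoef, h, show 2 * (k + 1) = 2 * k + 1 + 1 by ring, Nat.factorial_succ,
    Nat.factorial_succ]
  have : ((2 * k).factorial : ℝ) ≠ 0 := by positivity
  push_cast
  field_simp
  ring

/-- The Wallis-type quantity `H₂ₖ(0)² / (2k)!`, equal to `(2k choose k) / 4ᵏ`. -/
noncomputable def wallisCoef (k : ℕ) : ℝ := zcoef k ^ 2 * ((2 * k).factorial : ℝ)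

lemma wallisCoef_nonneg (k : ℕ) : 0 ≤ wallisCoef k := by unfold wallisCoef; positivity

lemma wallisCoef_succ_mul (k : ℕ) :
    wallisCoef (k + 1) * (2 * k + 2) = wallisCoef k * (2 * k + 1) := by
  rw [wallisCoef, wallisCoef, ← neg_sq (zcoef k), ← zcoef_succ_mul k,
    show 2 * (k + 1) = 2 * k + 1 + 1 by ring, Nat.factorial_succ, Nat.factorial_succ]
  push_cast; ring

lemma wallisCoef_sq_le (k : ℕ) : wallisCoef k ^ 2 * (2 * k + 1) ≤ 1 := by
  induction k with
  | zero => simp [wallisCoef, zcoef_zero]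
  | succ k ih =>
    have h := wallisCoef_succ_mul k
    have h2 : wallisCoef (k + 1) ^ 2 * (2 * k + 2) ^ 2 = wallisCoef k ^ 2 * (2 * k + 1) ^ 2 := by
      rw [← mul_pow, h, mul_pow]
    have hk : (0 : ℝ) < (2 * k + 2 : ℝ) ^ 2 := by positivity
    refine le_of_mul_le_mul_right ?_ hk
    push_cast
    calc wallisCoef (k + 1) ^ 2 * (2 * (k + 1) + 1 : ℝ) * (2 * k + 2 : ℝ) ^ 2
        = (wallisCoef k ^ 2 * (2 * k + 1 : ℝ)) * ((2 * k + 1 : ℝ) * (2 * k + 3)) := by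
          linear_combination (2 * k + 3 : ℝ) * h2
      _ ≤ 1 * ((2 * k + 1 : ℝ) * (2 * k + 3)) := by gcongr
      _ ≤ 1 * (2 * k + 2 : ℝ) ^ 2 := by nlinarith

lemma wallisCoef_le (k : ℕ) : wallisCoef k ≤ √(1 / (2 * k + 1)) := by
  apply Real.le_sqrt_of_sq_le
  rw [le_div_iff₀ (by positivity)]
  exact wallisCoef_sq_le k

lemma wallisCoef_le_one (k : ℕ) : wallisCoef k ≤ 1 := by
  refine (wallisCoef_le k).trans (Real.sqrt_le_one.2 ?_)
  rw [div_le_one (by positivity)]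
  have : (0 : ℝ) ≤ k := Nat.cast_nonneg k
  linarith

lemma tendsto_wallisCoef : Filter.Tendsto wallisCoef Filter.atTop (nhds 0) := by
  refine squeeze_zero wallisCoef_nonneg wallisCoef_le ?_
  rw [← Real.sqrt_zero]
  refine (Real.continuous_sqrt.tendsto 0).comp ?_
  refine squeeze_zero (fun k => by positivity) (fun k => ?_) tendsto_one_div_add_atTop_nhds_zero_nat
  have : (0 : ℝ) ≤ k := Nat.cast_nonneg k
  gcongr
  linarith

/-! ### Absolute convergence -/

/-- The annihilation operator `x/2 + d/dx` on Schwartz functions. -/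
noncomputable def lower (ψ : SchwartzMap ℝ ℝ) : SchwartzMap ℝ ℝ :=
  SchwartzMap.smulLeftCLM ℝ (fun x : ℝ => x / 2) ψ + SchwartzMap.derivCLM ℝ ℝ ψ

lemma lower_apply (ψ : SchwartzMap ℝ ℝ) (x : ℝ) : lower ψ x = x / 2 * ψ x + deriv ψ x := by
  have h : Function.HasTemperateGrowth (fun x : ℝ => x / 2) := by
    simp only [div_eq_mul_inv]; fun_prop
  simp [lower, SchwartzMap.smulLeftCLM_apply_apply h, SchwartzMap.derivCLM_apply]

lemma schwartz_bounded (ψ : SchwartzMap ℝ ℝ) : ∃ C, ∀ x, |ψ x| ≤ C := by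
  obtain ⟨C, -, hC⟩ := ψ.decay 0 0
  exact ⟨C, fun x => by simpa using hC x⟩

lemma schwartz_gaussInt (ψ : SchwartzMap ℝ ℝ) : GaussInt ψ := by
  obtain ⟨C, hC⟩ := schwartz_bounded ψ
  exact GaussInt.of_bounded ψ.continuous hC

lemma hcoef_schwartz_succ (ψ : SchwartzMap ℝ ℝ) (n : ℕ) :
    hcoef ψ (n + 1) = hcoef (lower ψ) n := by
  rw [hcoef_succ (f' := SchwartzMap.derivCLM ℝ ℝ ψ) (fun x => ψ.differentiableAt.hasDerivAt)
    (schwartz_gaussInt ψ) (schwartz_gaussInt _)]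
  congr 1; ext x; rw [lower_apply]; simp [SchwartzMap.derivCLM_apply]

lemma summable_zcoef_mul_hcoef (ψ : SchwartzMap ℝ ℝ) :
    Summable (fun k => zcoef k * hcoef ψ (2 * k)) := by
  rw [← summable_nat_add_iff 2]
  -- Lowering `2(k+2)` by four gains a factor `(2k+1)(2k+2)(2k+3)(2k+4) ≥ (k+1)⁴` in the square
  -- of the Cauchy–Schwarz bound.
  set χ := lower (lower (lower (lower ψ))) with hχ
  set C : ℝ := (∫ x, χ x ^ 2) * √(2 * π) with hC
  have hC0 : 0 ≤ C := mul_nonneg (integral_nonneg fun x => sq_nonneg _) (Real.sqrt_nonneg _)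
  have hs : Summable (fun k : ℕ => √C * (1 / ((k + 1 : ℕ) : ℝ) ^ 2)) :=
    ((summable_nat_add_iff 1).2 (Real.summable_one_div_nat_pow.2 (by norm_num))).mul_left _
  refine hs.of_norm_bounded fun k => ?_
  have e : hcoef ψ (2 * (k + 2)) = hcoef χ (2 * k) := by
    rw [show 2 * (k + 2) = 2 * k + 1 + 1 + 1 + 1 by ring]
    simp only [hcoef_schwartz_succ, hχ]
  rw [e, Real.norm_eq_abs]
  refine abs_le_of_sq_le_sq ?_ (by positivity)
  have h1 := hcoef_sq_le (schwartz_gaussInt χ)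
    ((memLp_two_iff_integrable_sq χ.continuous.aestronglyMeasurable).1 (χ.memLp 2)) (2 * k)
  have h2 : zcoef (k + 2) ^ 2 * ((2 * k).factorial : ℝ) * ((k + 1 : ℕ) : ℝ) ^ 4 ≤ 1 := by
    refine le_trans ?_ (wallisCoef_le_one (k + 2))
    rw [wallisCoef, show 2 * (k + 2) = 2 * k + 1 + 1 + 1 + 1 by ring]
    simp only [Nat.factorial_succ]
    rw [mul_assoc]
    gcongr
    norm_cast
    calc (2 * k).factorial * (k + 1) ^ 4
        = (k + 1) * ((k + 1) * ((k + 1) * ((k + 1) * (2 * k).factorial))) := by ring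
      _ ≤ _ := by gcongr <;> omega
  calc (zcoef (k + 2) * hcoef χ (2 * k)) ^ 2
      = zcoef (k + 2) ^ 2 * hcoef χ (2 * k) ^ 2 := by ring
    _ ≤ zcoef (k + 2) ^ 2 * ((∫ x, χ x ^ 2) * (√(2 * π) * (2 * k).factorial)) := by gcongr
    _ = C * (zcoef (k + 2) ^ 2 * (2 * k).factorial) := by rw [hC]; ring
    _ ≤ C * (1 / ((k + 1 : ℕ) : ℝ) ^ 4) := by
        gcongr
        rw [le_div_iff₀ (by positivity)]
        exact h2
    _ = (√C * (1 / ((k + 1 : ℕ) : ℝ) ^ 2)) ^ 2 := by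
        rw [mul_pow, Real.sq_sqrt hC0]; ring

/-! ### Division by `x` -/

/-- Hadamard's lemma on the line: a function vanishing at `0` with two bounded derivatives is
`x φ(x)` with `φ` continuously differentiable and `φ`, `φ'` bounded. -/
lemma exists_eq_mul_of_zero {g g₁ g₂ : ℝ → ℝ} (h₁ : ∀ x, HasDerivAt g (g₁ x) x)
    (h₂ : ∀ x, HasDerivAt g₁ (g₂ x) x) (hc : Continuous g₂) {C : ℝ} (b₁ : ∀ x, |g₁ x| ≤ C)
    (b₂ : ∀ x, |g₂ x| ≤ C) (h0 : g 0 = 0) :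
    ∃ φ φ' : ℝ → ℝ, (∀ x, HasDerivAt φ (φ' x) x) ∧ Continuous φ' ∧ (∀ x, |φ x| ≤ C) ∧
      (∀ x, |φ' x| ≤ C) ∧ ∀ x, g x = x * φ x := by
  have hc₁ : Continuous g₁ := continuous_iff_continuousAt.2 fun x => (h₂ x).continuousAt
  have hC : 0 ≤ C := (abs_nonneg _).trans (b₁ 0)
  have hb (t x : ℝ) (ht : t ∈ Set.uIoc (0 : ℝ) 1) : |t * g₂ (t * x)| ≤ C := by
    rw [Set.uIoc_of_le zero_le_one] at ht
    rw [abs_mul, abs_of_pos ht.1]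
    calc t * |g₂ (t * x)| ≤ 1 * C := by gcongr; exacts [ht.2, b₂ _]
      _ = C := one_mul C
  refine ⟨fun x => ∫ t in (0 : ℝ)..1, g₁ (t * x), fun x => ∫ t in (0 : ℝ)..1, t * g₂ (t * x),
    fun x => ?_, ?_, fun x => ?_, fun x => ?_, fun x => ?_⟩
  · refine (intervalIntegral.hasDerivAt_integral_of_dominated_loc_of_deriv_le
      (F := fun x t => g₁ (t * x)) (F' := fun x t => t * g₂ (t * x)) (bound := fun _ => C)
      (s := Set.univ) Filter.univ_mem (Filter.Eventually.of_forall fun y => ?_) ?_ ?_ ?_ ?_ ?_).2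
    · exact (by fun_prop : Continuous fun t => g₁ (t * y)).aestronglyMeasurable
    · exact (by fun_prop : Continuous fun t => g₁ (t * x)).intervalIntegrable _ _
    · exact (by fun_prop : Continuous fun t => t * g₂ (t * x)).aestronglyMeasurable
    · exact ae_of_all _ fun t ht y _ => hb t y ht
    · exact intervalIntegrable_const
    · refine ae_of_all _ fun t _ y _ => ?_
      have := (h₂ (t * y)).comp y ((hasDerivAt_id y).const_mul t)
      exact this.congr_deriv (by simp [mul_comm])
  · apply intervalIntegral.continuous_parametric_intervalIntegral_of_continuous'
    fun_prop
  · simpa using intervalIntegral.norm_integral_le_of_norm_le_const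
      (a := 0) (b := 1) (f := fun t => g₁ (t * x)) (C := C) fun t _ => b₁ _
  · simpa using intervalIntegral.norm_integral_le_of_norm_le_const
      (a := 0) (b := 1) (f := fun t => t * g₂ (t * x)) (C := C) fun t ht => hb t x ht
  · have hd (t : ℝ) : HasDerivAt (fun t => g (t * x)) (x * g₁ (t * x)) t := by
      have := (h₁ (t * x)).comp t ((hasDerivAt_id t).mul_const x)
      exact this.congr_deriv (by simp [mul_comm])
    have := intervalIntegral.integral_eq_sub_of_hasDerivAt (a := 0) (b := 1) (fun t _ => hd t)
      ((by fun_prop : Continuous fun t => x * g₁ (t * x)).intervalIntegrable _ _)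
    simp only [intervalIntegral.integral_const_mul, one_mul, zero_mul, h0, sub_zero] at this
    exact this.symm

lemma abs_mul_gauss_le {q x : ℝ} (h : |q| ≤ 1 + x ^ 2 / 4) : |q * exp (-x ^ 2 / 4)| ≤ 1 := by
  rw [abs_mul, abs_of_pos (exp_pos _), neg_div, exp_neg, ← div_eq_mul_inv,
    div_le_one (exp_pos _)]
  have := add_one_le_exp (x ^ 2 / 4)
  linarith

/-- The quotient `φ(x) = (ψ(x) - ψ(0) exp (-x² / 4)) / x` extends to a bounded `C¹` function with
`(x/2 + d/dx) φ` square integrable. -/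
lemma exists_quotient (ψ : SchwartzMap ℝ ℝ) :
    ∃ φ φ' : ℝ → ℝ, (∀ x, HasDerivAt φ (φ' x) x) ∧ GaussInt φ ∧ GaussInt φ' ∧
      GaussInt (fun x => x / 2 * φ x + φ' x) ∧
      Integrable (fun x => (x / 2 * φ x + φ' x) ^ 2) ∧
      ∀ x, ψ x = ψ 0 * exp (-x ^ 2 / 4) + x * φ x := by
  set ψ₁ := SchwartzMap.derivCLM ℝ ℝ ψ with hψ₁
  set ψ₂ := SchwartzMap.derivCLM ℝ ℝ ψ₁ with hψ₂
  obtain ⟨C₀, hC₀⟩ := schwartz_bounded ψ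
  obtain ⟨C₁, hC₁⟩ := schwartz_bounded ψ₁
  obtain ⟨C₂, hC₂⟩ := schwartz_bounded ψ₂
  have p₀ := (abs_nonneg _).trans (hC₀ 0)
  have p₁ := (abs_nonneg _).trans (hC₁ 0)
  have p₂ := (abs_nonneg _).trans (hC₂ 0)
  have d₀ (x : ℝ) : HasDerivAt ψ (ψ₁ x) x := ψ.differentiableAt.hasDerivAt
  have d₁ (x : ℝ) : HasDerivAt ψ₁ (ψ₂ x) x := ψ₁.differentiableAt.hasDerivAt
  set C := C₀ + C₁ + C₂ + |ψ 0| with hC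
  have bound {a q x D : ℝ} (ha : |a| ≤ D) (hq : |q| ≤ 1 + x ^ 2 / 4) :
      |a + ψ 0 * (q * exp (-x ^ 2 / 4))| ≤ D + |ψ 0| := by
    refine (abs_add_le _ _).trans (add_le_add ha ?_)
    rw [abs_mul]
    exact mul_le_of_le_one_right (abs_nonneg _) (abs_mul_gauss_le hq)
  let g : ℝ → ℝ := fun x => ψ x + ψ 0 * (-1 * exp (-x ^ 2 / 4))
  let g₁ : ℝ → ℝ := fun x => ψ₁ x + ψ 0 * (x / 2 * exp (-x ^ 2 / 4))
  let g₂ : ℝ → ℝ := fun x => ψ₂ x + ψ 0 * ((1 / 2 - x ^ 2 / 4) * exp (-x ^ 2 / 4))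
  have hg₁ (x : ℝ) : HasDerivAt g (g₁ x) x :=
    ((d₀ x).add (((hasDerivAt_gauss x).const_mul (-1)).const_mul (ψ 0))).congr_deriv
      (by simp only [g₁]; ring)
  have hg₂ (x : ℝ) : HasDerivAt g₁ (g₂ x) x :=
    ((d₁ x).add ((((hasDerivAt_id x).div_const 2).mul (hasDerivAt_gauss x)).const_mul
      (ψ 0))).congr_deriv (by simp only [g₂, id]; ring)
  have hgc : Continuous g := continuous_iff_continuousAt.2 fun x => (hg₁ x).continuousAt
  have hgc₂ : Continuous g₂ := by have := ψ₂.continuous; fun_prop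
  have hb (x : ℝ) : |g x| ≤ C :=
    (bound (hC₀ x) (by rw [abs_neg, abs_one]; nlinarith [sq_nonneg x])).trans (by linarith)
  have hb₁ (x : ℝ) : |g₁ x| ≤ C :=
    (bound (hC₁ x) (abs_le.2 ⟨by nlinarith [sq_nonneg (x + 2)], by
      nlinarith [sq_nonneg (x - 2)]⟩)).trans (by linarith)
  have hb₂ (x : ℝ) : |g₂ x| ≤ C :=
    (bound (hC₂ x) (abs_le.2 ⟨by linarith, by nlinarith [sq_nonneg x]⟩)).trans (by linarith)
  obtain ⟨φ, φ', hd, hc', b, b', hφ⟩ :=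
    exists_eq_mul_of_zero hg₁ hg₂ hgc₂ hb₁ hb₂ (by simp [g])
  have hc : Continuous φ := continuous_iff_continuousAt.2 fun x => (hd x).continuousAt
  have eA : (fun x => x / 2 * φ x + φ' x) = fun x => 1 / 2 * g x + φ' x := by
    ext x; rw [hφ x]; ring
  -- Differentiating `g = x φ` shows that `φ'` decays like `1 / |x|`.
  have hx (x : ℝ) : x * φ' x = g₁ x - φ x := by
    have h := (hasDerivAt_id x).mul (hd x)
    have e : (id * φ : ℝ → ℝ) = g := by ext y; simp [hφ y]
    rw [e] at h
    have := h.unique (hg₁ x)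
    simp only [id] at this
    linarith
  have l1 : MemLp φ' 2 := by
    rw [memLp_two_iff_integrable_sq hc'.aestronglyMeasurable]
    refine (integrable_inv_one_add_sq.const_mul (5 * C ^ 2)).mono'
      (hc'.pow 2).aestronglyMeasurable (ae_of_all _ fun x => ?_)
    rw [Real.norm_of_nonneg (sq_nonneg _), ← div_eq_mul_inv, le_div_iff₀ (by positivity)]
    have s1 : φ' x ^ 2 ≤ C ^ 2 := sq_le_sq' (abs_le.1 (b' x)).1 (abs_le.1 (b' x)).2
    have s2 : (x * φ' x) ^ 2 ≤ (2 * C) ^ 2 := by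
      rw [hx]
      have := abs_le.1 (hb₁ x)
      have := abs_le.1 (b x)
      exact sq_le_sq' (by linarith) (by linarith)
    nlinarith
  have l2 : MemLp g 2 := by
    refine (ψ.memLp 2).add (MemLp.const_mul (f := fun x : ℝ => -1 * exp (-x ^ 2 / 4)) ?_ (ψ 0))
    rw [memLp_two_iff_integrable_sq (by fun_prop)]
    refine (integrable_exp_neg_mul_sq (b := 1 / 2) (by norm_num)).congr (ae_of_all _ fun x => ?_)
    simp only [← exp_quarter_mul_self]; ring
  refine ⟨φ, φ', hd, GaussInt.of_bounded hc b, GaussInt.of_bounded hc' b', ?_, ?_, fun x => ?_⟩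
  · rw [eA]
    refine GaussInt.of_bounded (C := 1 / 2 * C + C) (by fun_prop) fun x => ?_
    refine (abs_add_le _ _).trans (add_le_add ?_ (b' x))
    rw [abs_mul, abs_of_pos (by norm_num : (0 : ℝ) < 1 / 2)]
    gcongr
    exact hb x
  · have l3 : MemLp (fun x => 1 / 2 * g x + φ' x) 2 := (l2.const_mul (1 / 2)).add l1
    simp only [funext_iff] at eA
    simp only [eA]
    exact (memLp_two_iff_integrable_sq l3.1).1 l3
  · rw [← hφ x]; simp only [g]; ring

/-! ### Telescoping -/

lemma hcoef_gauss_add {φ : ℝ → ℝ} (hφ : GaussInt φ) (c : ℝ) (n : ℕ) :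
    hcoef (fun x => c * exp (-x ^ 2 / 4) + x * φ x) n =
      c * hcoef (fun x => exp (-x ^ 2 / 4)) n + hcoef (fun x => x * φ x) n := by
  have i1 : Integrable (fun x : ℝ =>
      exp (-x ^ 2 / 4) * aeval x (hermite n) * exp (-x ^ 2 / 4)) := by
    simpa using GaussInt.poly 1 (hermite n)
  have i2 : Integrable (fun x : ℝ => x * φ x * aeval x (hermite n) * exp (-x ^ 2 / 4)) := by
    refine (hφ (X * hermite n)).congr (ae_of_all _ fun x => ?_)
    simp only [map_mul, aeval_X]; ring
  simp only [hcoef]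
  rw [← integral_const_mul, ← integral_add (i1.const_mul c) i2]
  congr 1; ext x; ring

lemma hcoef_mul_zero (φ : ℝ → ℝ) : hcoef (fun x => x * φ x) 0 = hcoef φ 1 := by
  simp [hcoef, mul_comm]

lemma hcoef_mul_succ {φ : ℝ → ℝ} (hφ : GaussInt φ) (n : ℕ) :
    hcoef (fun x => x * φ x) (n + 1) = hcoef φ (n + 2) + (n + 1) * hcoef φ n := by
  simp only [hcoef]
  rw [← integral_const_mul, ← integral_add (hφ _) ((hφ _).const_mul _)]
  congr 1; ext x; rw [aeval_hermite_add_two]; ring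

/-- Christoffel–Darboux summation: writing `f = c exp (-x² / 4) + x φ`, the three-term recurrence
makes the partial sums collapse to their last term. -/
lemma sum_zcoef_mul_hcoef {φ : ℝ → ℝ} (hφ : GaussInt φ) (c : ℝ) (N : ℕ) :
    ∑ k ∈ Finset.range (N + 1),
        zcoef k * hcoef (fun x => c * exp (-x ^ 2 / 4) + x * φ x) (2 * k) =
      √(2 * π) * c + zcoef N * hcoef φ (2 * N + 1) := by
  induction N with
  | zero =>
    simp only [zero_add, Finset.sum_range_one, mul_zero, hcoef_gauss_add hφ, hcoef_gauss_zero,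
      hcoef_mul_zero, zcoef_zero]
    ring
  | succ N ih =>
    rw [Finset.sum_range_succ, ih, hcoef_gauss_add hφ, show 2 * (N + 1) = 2 * N + 1 + 1 by ring,
      hcoef_gauss_succ, hcoef_mul_succ hφ]
    push_cast
    linear_combination hcoef φ (2 * N + 1) * zcoef_succ_mul N

/-- Cauchy–Schwarz gives `|zcoef N * hcoef f (2N)|² ≤ √(2π) ‖f‖² wallisCoef N`, which is
`O(N ^ (-1/2))`. -/
lemma tendsto_zcoef_mul_hcoef {f : ℝ → ℝ} (hf : GaussInt f)
    (hf2 : Integrable (fun x => f x ^ 2)) :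
    Filter.Tendsto (fun N => zcoef N * hcoef f (2 * N)) Filter.atTop (nhds 0) := by
  have h : Filter.Tendsto (fun N => √((∫ x, f x ^ 2) * √(2 * π) * wallisCoef N))
      Filter.atTop (nhds 0) := by
    have := (tendsto_wallisCoef.const_mul ((∫ x, f x ^ 2) * √(2 * π))).sqrt
    simpa using this
  refine squeeze_zero_norm (fun N => Real.le_sqrt_of_sq_le ?_) h
  rw [Real.norm_eq_abs, sq_abs, mul_pow, wallisCoef]
  calc zcoef N ^ 2 * hcoef f (2 * N) ^ 2
      ≤ zcoef N ^ 2 * ((∫ x, f x ^ 2) * (√(2 * π) * (2 * N).factorial)) := by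
        gcongr; exact hcoef_sq_le hf hf2 _
    _ = _ := by ring

/-- Hermite-expansion representation of the Dirac delta at `0`: for every Schwartz
function `ψ`, the series `(1/√(2π)) ∑ₙ (Hₙ(0)/n!) ∫ ψ(x) Hₙ(x) e^{-x²/4} dx`
converges to `ψ(0)`. -/
theorem delta_hermite_expansion (ψ : SchwartzMap ℝ ℝ) :
    HasSum (fun n : ℕ =>
      (1 / Real.sqrt (2 * π)) * (aeval (0 : ℝ) (hermite n)) / (n.factorial : ℝ) *
        ∫ x : ℝ, ψ x * (aeval x (hermite n)) * Real.exp (-x ^ 2 / 4))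
      (ψ 0) := by
  obtain ⟨φ, φ', hd, hφ, hφ', hA, hA2, hψ⟩ := exists_quotient ψ
  have hψf : (ψ : ℝ → ℝ) = fun x => ψ 0 * exp (-x ^ 2 / 4) + x * φ x := funext hψ
  have hlim : Filter.Tendsto
      (fun N => ∑ k ∈ Finset.range (N + 1), zcoef k * hcoef ψ (2 * k)) Filter.atTop
      (nhds (√(2 * π) * ψ 0)) := by
    have h := (tendsto_zcoef_mul_hcoef hA hA2).const_add (√(2 * π) * ψ 0)
    rw [add_zero] at h
    refine h.congr fun N => ?_
    rw [hψf, sum_zcoef_mul_hcoef hφ, hcoef_succ hd hφ hφ']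
    simp
  have hsum : HasSum (fun k => zcoef k * hcoef ψ (2 * k)) (√(2 * π) * ψ 0) := by
    have hs := (summable_zcoef_mul_hcoef ψ).hasSum
    rwa [tendsto_nhds_unique
      (hs.tendsto_sum_nat.comp (Filter.tendsto_add_atTop_nat 1)) hlim] at hs
  -- The terms of odd index vanish.
  have hinj : Function.Injective (fun k : ℕ => 2 * k) := fun a b h => by simpa using h
  rw [← hinj.hasSum_iff]
  · have hpos : √(2 * π) ≠ 0 := by positivity
    have h := hsum.mul_left (1 / √(2 * π))
    have e : 1 / √(2 * π) * (√(2 * π) * ψ 0) = ψ 0 := by field_simp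
    rw [e] at h
    refine h.congr_fun fun k => ?_
    simp only [Function.comp, zcoef, hcoef]; ring
  · intro n hn
    have hodd : Odd n := by
      by_contra h
      obtain ⟨k, hk⟩ := Nat.not_odd_iff_even.1 h
      exact hn ⟨k, by simp only; omega⟩
    obtain ⟨k, rfl⟩ := hodd
    rw [aeval_zero_hermite_odd]; simp
end

section
/- Let \(A : \mathbb{R} \to \mathbb{R}\) be differentiable, let I be an open interval with \(A(z) \ne 0\) for all \(z \in I\), and let \(g : I \to \mathbb{R}\) be an antiderivative of \(1/A\) on I (i.e., \(g'(z) = 1/A(z)\) for \(z \in I\)). Suppose \(x, p : [0,T] \to \mathbb{R}\) are differentiable, \(x(t) \in I\) for all \(t \in [0,T]\), and \(\dot{x} = 2A(x)^2 p\), \(\dot{p} = -2A(x)A'(x)p^2\) on [0,T]. Then for all \(t \in [0,T]\): \(g(x(t)) - g(x(0)) = 2\, p(0)\, A(x(0))\, t\). -/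
/-!
The Hamiltonian is `(p A(x))²`, and already `p A(x)` is conserved:
the two terms of its derivative, `ṗ A(x) = -2 A² A' p²` and `p A'(x) ẋ = 2 A² A' p²`, cancel.
Hence `(g ∘ x)' = ẋ / A(x) = 2 A(x) p` is the constant `2 p(0) A(x(0))`, and so
`g (x t) - 2 p(0) A(x(0)) t` has derivative zero on `[0, T]`.
-/

theorem eq_initial_of_hasDerivWithinAt_zero {T : ℝ} {f : ℝ → ℝ}
    (hf : ∀ t ∈ Set.Icc (0 : ℝ) T, HasDerivWithinAt f 0 (Set.Icc (0 : ℝ) T) t) :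
    ∀ t ∈ Set.Icc (0 : ℝ) T, f t = f 0 := by
  refine constant_of_has_deriv_right_zero (fun t ht => (hf t ht).continuousWithinAt) ?_
  intro t ht
  exact (hf t (Set.Ico_subset_Icc_self ht)).mono_of_mem_nhdsWithin
    (Icc_mem_nhdsGE_of_mem ht)

/-- Quadrature of the Hamilton system for `H(x,p) = A(x)²p²`: if `g` is an
antiderivative of `1/A` on an open interval `I` with `A ≠ 0` on `I`, and
`x, p` solve `ẋ = 2A(x)²p`, `ṗ = -2A(x)A'(x)p²` on `[0,T]` with `x(t) ∈ I`,
then `g(x(t)) - g(x(0)) = 2 p(0) A(x(0)) t` for all `t ∈ [0,T]`. -/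
theorem hamilton_system_quadrature (A : ℝ → ℝ) (hA : Differentiable ℝ A)
    (a b : ℝ) (g : ℝ → ℝ)
    (hA0 : ∀ z ∈ Set.Ioo a b, A z ≠ 0)
    (hg : ∀ z ∈ Set.Ioo a b, HasDerivAt g (1 / A z) z)
    (T : ℝ) (hT : 0 < T) (x p : ℝ → ℝ)
    (hxI : ∀ t ∈ Set.Icc (0 : ℝ) T, x t ∈ Set.Ioo a b)
    (hx : ∀ t ∈ Set.Icc (0 : ℝ) T,
      HasDerivWithinAt x (2 * (A (x t)) ^ 2 * p t) (Set.Icc (0 : ℝ) T) t)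
    (hp : ∀ t ∈ Set.Icc (0 : ℝ) T,
      HasDerivWithinAt p (-(2 * A (x t) * deriv A (x t) * (p t) ^ 2))
        (Set.Icc (0 : ℝ) T) t) :
    ∀ t ∈ Set.Icc (0 : ℝ) T, g (x t) - g (x 0) = 2 * p 0 * A (x 0) * t := by
  have hint : ∀ t ∈ Set.Icc (0 : ℝ) T, p t * A (x t) = p 0 * A (x 0) := by
    refine eq_initial_of_hasDerivWithinAt_zero (f := fun t => p t * A (x t)) fun t ht => ?_
    have hAx := (hA (x t)).hasDerivAt.comp_hasDerivWithinAt t (hx t ht)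
    refine ((hp t ht).mul hAx).congr_deriv ?_
    simp only [Function.comp_apply]
    ring
  have hconst := eq_initial_of_hasDerivWithinAt_zero (T := T)
    (f := fun t => g (x t) - 2 * p 0 * A (x 0) * t) fun t ht => by
      have hgx := (hg (x t) (hxI t ht)).comp_hasDerivWithinAt t (hx t ht)
      have hlin := (hasDerivWithinAt_id t (Set.Icc (0 : ℝ) T)).const_mul (2 * p 0 * A (x 0))
      refine (hgx.sub hlin).congr_deriv ?_
      have hne := hA0 (x t) (hxI t ht)
      have hval : 1 / A (x t) * (2 * A (x t) ^ 2 * p t) = 2 * (p t * A (x t)) := by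
        field_simp
      rw [hval, hint t ht]
      ring
  intro t ht
  have h := hconst t ht
  simp only [mul_zero, sub_zero] at h
  linarith
end

section
/- Let \(\beta \in (0,1)\), \(t, \xi \in \mathbb{R}\), let \(a : (0,\infty) \to \mathbb{R}\) be continuously differentiable with \(a(y) \ne 0\) for all y > 0, and let \(g : (0,\infty) \to \mathbb{R}\) satisfy \(g'(y) = \frac{1}{y\, a(y)}\). Suppose \(x : I \to (0,\infty)\) is a differentiable function on an open interval \(I \subset (0,\infty)\) satisfying \(g(x(x_0)) - g(x_0) = \frac{2\beta t}{1-\beta}\, x_0\, a(x_0)\, (x_0 - \xi)\) for all \(x_0 \in I\). Then for all \(x_0 \in I\): \(x'(x_0) = \frac{x(x_0)\, a(x(x_0))}{x_0\, a(x_0)} \left(1 + \frac{2\beta t\, x_0\, a(x_0)}{1-\beta}\left(a(x_0)(2x_0 - \xi) + x_0\, a'(x_0)(x_0 - \xi)\right)\right)\). -/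
/-! Both sides of `g (x s) - g s = 2βt/(1-β) · s a(s) (s-ξ)` are differentiable in `s`, and they
agree near every point of the open interval, so their derivatives there coincide. By the chain rule
this reads `x'/(x a(x)) - 1/(x₀ a(x₀)) = 2βt/(1-β) · (a(x₀)(2x₀-ξ) + x₀ a'(x₀)(x₀-ξ))`, which is
solved for `x'` because `x a(x)` and `x₀ a(x₀)` do not vanish. -/

/-- Implicit differentiation of the characteristic map for the general degenerate
Hamiltonian `H(x,p) = x²a(x)²p²`: if `g' = 1/(y a(y))` on `(0,∞)` and `x : I → (0,∞)`
satisfies `g(x(x₀)) - g(x₀) = (2βt/(1-β)) x₀ a(x₀)(x₀-ξ)` on an open interval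
`I ⊂ (0,∞)`, then
`x'(x₀) = (x(x₀) a(x(x₀)))/(x₀ a(x₀)) · (1 + (2βt x₀ a(x₀)/(1-β))(a(x₀)(2x₀-ξ) + x₀ a'(x₀)(x₀-ξ)))`. -/
theorem characteristic_map_general_jacobian (β t ξ : ℝ) (hβ : β ∈ Set.Ioo (0 : ℝ) 1)
    (a a' : ℝ → ℝ)
    (ha : ∀ y ∈ Set.Ioi (0 : ℝ), HasDerivAt a (a' y) y)
    (ha' : ContinuousOn a' (Set.Ioi (0 : ℝ)))
    (ha0 : ∀ y ∈ Set.Ioi (0 : ℝ), a y ≠ 0)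
    (g : ℝ → ℝ)
    (hg : ∀ y ∈ Set.Ioi (0 : ℝ), HasDerivAt g (1 / (y * a y)) y)
    (c d : ℝ) (hI : Set.Ioo c d ⊆ Set.Ioi (0 : ℝ))
    (x : ℝ → ℝ)
    (hxpos : ∀ x₀ ∈ Set.Ioo c d, x x₀ ∈ Set.Ioi (0 : ℝ))
    (hxdiff : ∀ x₀ ∈ Set.Ioo c d, DifferentiableAt ℝ x x₀)
    (hrel : ∀ x₀ ∈ Set.Ioo c d,
      g (x x₀) - g x₀ = 2 * β * t / (1 - β) * x₀ * a x₀ * (x₀ - ξ)) :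
    ∀ x₀ ∈ Set.Ioo c d,
      deriv x x₀ =
        (x x₀ * a (x x₀)) / (x₀ * a x₀) *
          (1 + 2 * β * t * x₀ * a x₀ / (1 - β) *
            (a x₀ * (2 * x₀ - ξ) + x₀ * a' x₀ * (x₀ - ξ))) := by
  intro s hs
  have hs0 := hI hs
  have hX := hxpos s hs
  have hl : HasDerivAt (fun u => g (x u) - g u)
      (1 / (x s * a (x s)) * deriv x s - 1 / (s * a s)) s :=
    ((hg _ hX).comp s (hxdiff s hs).hasDerivAt).sub (hg s hs0)
  have hr : HasDerivAt (fun u => 2 * β * t / (1 - β) * u * a u * (u - ξ))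
      ((2 * β * t / (1 - β) * 1 * a s + 2 * β * t / (1 - β) * s * a' s) * (s - ξ)
        + 2 * β * t / (1 - β) * s * a s * 1) s :=
    (((hasDerivAt_id' s).const_mul _).mul (ha s hs0)).mul ((hasDerivAt_id' s).sub_const ξ)
  have heq : (fun u => g (x u) - g u) =ᶠ[nhds s]
      (fun u => 2 * β * t / (1 - β) * u * a u * (u - ξ)) := by
    filter_upwards [Ioo_mem_nhds hs.1 hs.2] with u hu using hrel u hu
  have h := hl.unique (hr.congr_of_eventuallyEq heq)
  have hs1 : s ≠ 0 := ne_of_gt hs0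
  have hX1 : x s ≠ 0 := ne_of_gt hX
  have ha1 := ha0 s hs0
  have ha2 := ha0 _ hX
  have hb : 1 - β ≠ 0 := by linarith [hβ.2]
  field_simp at h ⊢
  linear_combination h
end
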